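/- If H_{1,2} and H_{2,2} are invertible, H_{2,2}^† H_{2,2} − H_{1,2}^† H_{1,2} is positive semidefinite, and w_1 ≤ w_2, then the weighted sum-rate f is a concave function on the convex set of pairs (Σ_1, Σ_2) of Hermitian positive semidefinite matrices. -/

import Mathlib

open Matrix ComplexOrder

noncomputable section

/-!
Split the weighted sum-rate, with nonnegative coefficients, as
`w₁ log det(1 + H₁₂Σ₂H₁₂ᴴ + H₁₁Σ₁H₁₁ᴴ) + (w₂ - w₁) log det(1 + H₂₂Σ₂H₂₂ᴴ)
  + w₁ [log det(1 + H₂₂Σ₂H₂₂ᴴ) - log det(1 + H₁₂Σ₂H₁₂ᴴ)]`.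
The first two terms are concave because `log det` is. For the bracket, write
`H₂₂ᴴH₂₂ = H₁₂ᴴH₁₂ + EᴴE`. By the Weinstein–Aronszajn identity the first determinant is unchanged
when `H₂₂` is replaced by the stacked channel `G = [H₁₂; E]`, and `1 + H₁₂Σ₂H₁₂ᴴ` is the upper left
block of `1 + GΣ₂Gᴴ`. The bracket is therefore the log-determinant of the Schur complement of that
block. The Schur complement is operator concave, since it is the largest `X` with
`diag(0, X) ≤ M`, and `log det` is monotone and concave.
-/

section ConcaveComposition

variable {E F G : Type*} [AddCommMonoid E] [SMul ℝ E] [AddCommMonoid F] [SMul ℝ F]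
  [AddCommMonoid G] [PartialOrder G] [SMul ℝ G] {s : Set E} {t : Set F} {f : E → F} {g : F → G}

theorem concaveOn_comp_of_map_combo (hg : ConcaveOn ℝ t g) (hs : Convex ℝ s)
    (hst : Set.MapsTo f s t)
    (hf : ∀ x y (a b : ℝ), a + b = 1 → f (a • x + b • y) = a • f x + b • f y) :
    ConcaveOn ℝ s fun x => g (f x) :=
  ⟨hs, fun x hx y hy a b ha hb hab => by
    simpa only [hf x y a b hab] using hg.2 (hst hx) (hst hy) ha hb hab⟩

theorem concaveOn_comp_of_mapsTo [PartialOrder F] (hg : ConcaveOn ℝ t g)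
    (hg_mono : MonotoneOn g t) (hf : ConcaveOn ℝ s f) (hst : Set.MapsTo f s t) :
    ConcaveOn ℝ s (g ∘ f) :=
  ⟨hf.1, fun _ hx _ hy _ _ ha hb hab =>
    (hg.2 (hst hx) (hst hy) ha hb hab).trans <|
      hg_mono (hg.1 (hst hx) (hst hy) ha hb hab) (hst (hf.1 hx hy ha hb hab))
        (hf.2 hx hy ha hb hab)⟩

end ConcaveComposition

section WeightedSumRate

open scoped MatrixOrder

variable {𝕜 : Type*} [RCLike 𝕜] {m n : Type*}

theorem convex_setOf_posSemidef : Convex ℝ {A : Matrix n n 𝕜 | A.PosSemidef} :=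
  fun _ hA _ hB _ _ ha hb _ => (hA.smul ha).add (hB.smul hb)

theorem convex_setOf_posDef : Convex ℝ {A : Matrix n n 𝕜 | A.PosDef} :=
  convex_iff_forall_pos.mpr fun _ hA _ hB _ _ ha hb _ => (hA.smul ha).add (hB.smul hb)

section LogDet

variable [Fintype n]

open scoped Matrix.Norms.L2Operator in
theorem exists_eq_conjTranspose_mul_self {A : Matrix n n 𝕜} (hA : A.PosSemidef) :
    ∃ E : Matrix n n 𝕜, A = Eᴴ * E := by
  classical exact CStarAlgebra.nonneg_iff_eq_star_mul_self.mp hA.nonneg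

theorem re_trace_mul_nonneg {A B : Matrix n n 𝕜} (hA : A.PosSemidef) (hB : B.PosSemidef) :
    0 ≤ RCLike.re (A * B).trace := by
  obtain ⟨E, rfl⟩ := exists_eq_conjTranspose_mul_self hA
  rw [Matrix.mul_assoc, trace_mul_comm]
  exact (RCLike.nonneg_iff.mp (hB.mul_mul_conjTranspose_same E).trace_nonneg).1

variable [DecidableEq n]

/-- The log-determinant of a square matrix, which for a positive definite covariance matrix is the
differential entropy of the Gaussian distribution up to scaling and an additive constant. The
determinant of a Hermitian matrix is real, so taking its real part loses nothing; off the positive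
definite matrices the value may be a junk value of `Real.log`. -/
def logDet (A : Matrix n n 𝕜) : ℝ := Real.log (RCLike.re A.det)

theorem re_det_pos {A : Matrix n n 𝕜} (hA : A.PosDef) : 0 < RCLike.re A.det :=
  (RCLike.pos_iff.mp hA.det_pos).1

theorem logDet_eq_add_of_det_eq_mul {k : Type*} [Fintype k] [DecidableEq k] [Fintype m]
    [DecidableEq m] {A : Matrix m m 𝕜} {B : Matrix n n 𝕜} {C : Matrix k k 𝕜}
    (hA : A.PosDef) (hB : B.PosDef) (hC : C.det = A.det * B.det) :
    logDet C = logDet A + logDet B := by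
  have hre : RCLike.re C.det = RCLike.re A.det * RCLike.re B.det := by
    rw [hC, RCLike.mul_re, (RCLike.pos_iff.mp hA.det_pos).2, zero_mul, sub_zero]
  rw [logDet, hre, Real.log_mul (re_det_pos hA).ne' (re_det_pos hB).ne', logDet, logDet]

theorem logDet_le_trace_sub_card {A : Matrix n n 𝕜} (hA : A.PosDef) :
    logDet A ≤ RCLike.re A.trace - Fintype.card n := by
  have hdet : RCLike.re A.det = ∏ i, hA.1.eigenvalues i := by
    rw [hA.1.det_eq_prod_eigenvalues, ← RCLike.ofReal_prod, RCLike.ofReal_re]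
  have htrace : RCLike.re A.trace = ∑ i, hA.1.eigenvalues i := by
    rw [hA.1.trace_eq_sum_eigenvalues, ← RCLike.ofReal_sum, RCLike.ofReal_re]
  calc logDet A = ∑ i, Real.log (hA.1.eigenvalues i) := by
        rw [logDet, hdet, Real.log_prod fun i _ => (hA.eigenvalues_pos i).ne']
    _ ≤ ∑ i, (hA.1.eigenvalues i - 1) :=
        Finset.sum_le_sum fun i _ => Real.log_le_sub_one_of_pos (hA.eigenvalues_pos i)
    _ = RCLike.re A.trace - Fintype.card n := by
        rw [Finset.sum_sub_distrib, htrace]; simp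

open scoped Matrix.Norms.L2Operator in
theorem exists_isUnit_eq_conjTranspose_mul_self {A : Matrix n n 𝕜} (hA : A.PosDef) :
    ∃ E : Matrix n n 𝕜, IsUnit E ∧ A = Eᴴ * E :=
  CStarAlgebra.isStrictlyPositive_iff_eq_star_mul_self.mp hA.isStrictlyPositive

-- The tangent inequality of `logDet` at `B`: with `B⁻¹ = EᴴE` it is
-- `logDet_le_trace_sub_card` for `E A Eᴴ`.
theorem logDet_le_logDet_add_trace {A B : Matrix n n 𝕜} (hA : A.PosDef) (hB : B.PosDef) :
    logDet A ≤ logDet B + RCLike.re (B⁻¹ * (A - B)).trace := by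
  obtain ⟨E, hE, hBE⟩ := exists_isUnit_eq_conjTranspose_mul_self hB.inv
  have hBinv : B⁻¹ * B = 1 := nonsing_inv_mul B hB.det_pos.ne'.isUnit
  have hEAE : (E * A * Eᴴ).PosDef := (IsUnit.posDef_star_right_conjugate_iff hE).mpr hA
  have hdet : A.det = (E * A * Eᴴ).det * B.det := by
    calc A.det = (B⁻¹ * B).det * A.det := by rw [hBinv, det_one, one_mul]
      _ = (E * A * Eᴴ).det * B.det := by simp only [hBE, det_mul]; ring
  have htrace : (E * A * Eᴴ).trace = (B⁻¹ * (A - B)).trace + Fintype.card n := by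
    rw [trace_mul_comm, ← Matrix.mul_assoc, ← hBE, Matrix.mul_sub, hBinv, trace_sub, trace_one,
      sub_add_cancel]
  have hre : RCLike.re (E * A * Eᴴ).trace
      = RCLike.re (B⁻¹ * (A - B)).trace + Fintype.card n := by
    rw [htrace, map_add, RCLike.natCast_re]
  linarith [logDet_eq_add_of_det_eq_mul hEAE hB hdet, logDet_le_trace_sub_card hEAE]

theorem monotoneOn_logDet : MonotoneOn logDet {A : Matrix n n 𝕜 | A.PosDef} := by
  intro A hA B hB hAB
  have htrace : RCLike.re (B⁻¹ * (A - B)).trace = -RCLike.re (B⁻¹ * (B - A)).trace := by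
    rw [← neg_sub B A, Matrix.mul_neg, trace_neg, map_neg]
  linarith [logDet_le_logDet_add_trace hA hB, re_trace_mul_nonneg hB.inv.posSemidef hAB]

theorem concaveOn_logDet : ConcaveOn ℝ {A : Matrix n n 𝕜 | A.PosDef} logDet := by
  refine ⟨convex_setOf_posDef, fun A hA B hB a b ha hb hab => ?_⟩
  set C := a • A + b • B with hC
  have hCpos : C.PosDef := convex_setOf_posDef hA hB ha hb hab
  have hzero : a • (A - C) + b • (B - C) = 0 := by
    have hCC : a • C + b • C = C := by rw [← add_smul, hab, one_smul]
    rw [smul_sub, smul_sub, sub_add_sub_comm, hCC, ← hC, sub_self]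
  have htrace :
      a * RCLike.re (C⁻¹ * (A - C)).trace + b * RCLike.re (C⁻¹ * (B - C)).trace = 0 := by
    have := congrArg (fun M => RCLike.re (C⁻¹ * M).trace) hzero
    simpa [Matrix.mul_add, RCLike.smul_re] using this
  calc a * logDet A + b * logDet B
      ≤ a * (logDet C + RCLike.re (C⁻¹ * (A - C)).trace)
        + b * (logDet C + RCLike.re (C⁻¹ * (B - C)).trace) := by
        gcongr
        · exact logDet_le_logDet_add_trace hA hCpos
        · exact logDet_le_logDet_add_trace hB hCpos
    _ = logDet C := by linear_combination logDet C * hab + htrace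

end LogDet

section SchurComplement

/-- The Schur complement of the upper left block of a block matrix, i.e. the conditional covariance
of the second component given the first if `M` is a Gaussian covariance matrix. It is meaningful
only when that block is invertible, as `⁻¹` is `0` on singular matrices. -/
def schurComplement [Fintype m] [DecidableEq m] (M : Matrix (m ⊕ n) (m ⊕ n) 𝕜) : Matrix n n 𝕜 :=
  M.toBlocks₂₂ - M.toBlocks₂₁ * M.toBlocks₁₁⁻¹ * M.toBlocks₁₂

theorem posDef_toBlocks₁₁ {M : Matrix (m ⊕ n) (m ⊕ n) 𝕜} (hM : M.PosDef) :
    M.toBlocks₁₁.PosDef :=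
  hM.submatrix Sum.inl_injective

theorem conjTranspose_toBlocks₁₂ {M : Matrix (m ⊕ n) (m ⊕ n) 𝕜} (hM : M.IsHermitian) :
    M.toBlocks₁₂ᴴ = M.toBlocks₂₁ :=
  congrArg toBlocks₂₁ hM

variable [Fintype m] [DecidableEq m]

theorem le_schurComplement_iff [Finite n] {M : Matrix (m ⊕ n) (m ⊕ n) 𝕜} (hM : M.IsHermitian)
    (hM₁₁ : M.toBlocks₁₁.PosDef) {X : Matrix n n 𝕜} :
    X ≤ schurComplement M ↔ fromBlocks 0 0 0 X ≤ M := by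
  have := hM₁₁.isUnit.invertible
  have hdiff : M - fromBlocks 0 0 0 X
      = fromBlocks M.toBlocks₁₁ M.toBlocks₁₂ M.toBlocks₁₂ᴴ (M.toBlocks₂₂ - X) := by
    rw [conjTranspose_toBlocks₁₂ hM]
    conv_lhs => rw [← fromBlocks_toBlocks M]
    simp only [sub_eq_add_neg, fromBlocks_neg, fromBlocks_add, neg_zero, add_zero]
  rw [Matrix.le_iff, Matrix.le_iff, hdiff, hM₁₁.fromBlocks₁₁,
    conjTranspose_toBlocks₁₂ hM, schurComplement, sub_right_comm]

theorem concaveOn_schurComplement [Finite n] :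
    ConcaveOn ℝ {M : Matrix (m ⊕ n) (m ⊕ n) 𝕜 | M.PosDef} schurComplement := by
  have := Fintype.ofFinite n
  refine ⟨convex_setOf_posDef, fun M hM N hN a b ha hb hab => ?_⟩
  have hcombo : (a • M + b • N).PosDef := convex_setOf_posDef hM hN ha hb hab
  have hle {L : Matrix (m ⊕ n) (m ⊕ n) 𝕜} (hL : L.PosDef) :
      fromBlocks 0 0 0 (schurComplement L) ≤ L :=
    (le_schurComplement_iff hL.isHermitian (posDef_toBlocks₁₁ hL)).mp le_rfl
  rw [le_schurComplement_iff hcombo.isHermitian (posDef_toBlocks₁₁ hcombo)]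
  calc fromBlocks 0 0 0 (a • schurComplement M + b • schurComplement N)
      = a • fromBlocks 0 0 0 (schurComplement M) + b • fromBlocks 0 0 0 (schurComplement N) := by
        simp only [fromBlocks_smul, fromBlocks_add, smul_zero, add_zero]
    _ ≤ a • M + b • N := by
        gcongr
        · exact hle hM
        · exact hle hN

theorem det_eq_det_toBlocks₁₁_mul_det_schurComplement [Fintype n] [DecidableEq n]
    {M : Matrix (m ⊕ n) (m ⊕ n) 𝕜} (hM : IsUnit M.toBlocks₁₁) :
    M.det = M.toBlocks₁₁.det * (schurComplement M).det := by
  have := hM.invertible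
  conv_lhs => rw [← fromBlocks_toBlocks M, det_fromBlocks₁₁, invOf_eq_nonsing_inv]
  rfl

theorem posDef_schurComplement [Finite n] {M : Matrix (m ⊕ n) (m ⊕ n) 𝕜} (hM : M.PosDef) :
    (schurComplement M).PosDef := by
  classical
  have := Fintype.ofFinite n
  have hnonneg : 0 ≤ schurComplement M := by
    rw [le_schurComplement_iff hM.isHermitian (posDef_toBlocks₁₁ hM), fromBlocks_zero]
    exact hM.posSemidef.nonneg
  have hdet : M.toBlocks₁₁.det * (schurComplement M).det ≠ 0 := by
    rw [← det_eq_det_toBlocks₁₁_mul_det_schurComplement (posDef_toBlocks₁₁ hM).isUnit]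
    exact hM.det_pos.ne'
  exact hnonneg.posSemidef.posDef_iff_det_ne_zero.mpr (right_ne_zero_of_mul hdet)

variable [Fintype n] [DecidableEq n]

theorem logDet_schurComplement {M : Matrix (m ⊕ n) (m ⊕ n) 𝕜} (hM : M.PosDef) :
    logDet (schurComplement M) = logDet M - logDet M.toBlocks₁₁ :=
  eq_sub_of_add_eq' <| .symm <|
    logDet_eq_add_of_det_eq_mul (posDef_toBlocks₁₁ hM) (posDef_schurComplement hM) <|
      det_eq_det_toBlocks₁₁_mul_det_schurComplement (posDef_toBlocks₁₁ hM).isUnit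

-- For Gaussian covariances: conditional differential entropy is concave.
theorem concaveOn_logDet_sub_logDet_toBlocks₁₁ :
    ConcaveOn ℝ {M : Matrix (m ⊕ n) (m ⊕ n) 𝕜 | M.PosDef}
      fun M => logDet M - logDet M.toBlocks₁₁ :=
  ConcaveOn.congr (concaveOn_comp_of_mapsTo concaveOn_logDet monotoneOn_logDet
    concaveOn_schurComplement fun _ hM => posDef_schurComplement hM)
    fun _ hM => logDet_schurComplement hM

end SchurComplement

section Channel

variable {r r₁ r₂ t t₁ t₂ : Type*} [Fintype t] [Fintype t₁] [Fintype t₂]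

theorem one_add_mul_mul_conjTranspose_combo [DecidableEq r] (H : Matrix r t 𝕜)
    (S Z : Matrix t t 𝕜) {a b : ℝ} (hab : a + b = 1) :
    1 + H * (a • S + b • Z) * Hᴴ = a • (1 + H * S * Hᴴ) + b • (1 + H * Z * Hᴴ) := by
  rw [smul_add, smul_add, add_add_add_comm, ← add_smul, hab, one_smul, Matrix.mul_add,
    Matrix.add_mul, Matrix.mul_smul, Matrix.mul_smul, Matrix.smul_mul, Matrix.smul_mul]

theorem posDef_one_add_mul_mul_conjTranspose [Finite r] [DecidableEq r] (H : Matrix r t 𝕜)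
    {S : Matrix t t 𝕜} (hS : S.PosSemidef) : (1 + H * S * Hᴴ).PosDef :=
  PosDef.one.add_posSemidef (hS.mul_mul_conjTranspose_same H)

theorem concaveOn_comp_one_add_mul_mul_conjTranspose [Finite r] [DecidableEq r]
    {g : Matrix r r 𝕜 → ℝ} (hg : ConcaveOn ℝ {A | A.PosDef} g) (H : Matrix r t 𝕜) :
    ConcaveOn ℝ {S : Matrix t t 𝕜 | S.PosSemidef} fun S => g (1 + H * S * Hᴴ) :=
  concaveOn_comp_of_map_combo hg convex_setOf_posSemidef
    (fun _ hS => posDef_one_add_mul_mul_conjTranspose H hS)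
    fun S Z _ _ hab => one_add_mul_mul_conjTranspose_combo H S Z hab

variable [Fintype r₁] [DecidableEq r₁] [Fintype r₂] [DecidableEq r₂]

theorem concaveOn_logDet_one_add_add (H₁ : Matrix r₁ t₁ 𝕜) (H₂ : Matrix r₁ t₂ 𝕜) :
    ConcaveOn ℝ ({S : Matrix t₁ t₁ 𝕜 | S.PosSemidef} ×ˢ {S : Matrix t₂ t₂ 𝕜 | S.PosSemidef})
      fun S => logDet (1 + H₂ * S.2 * H₂ᴴ + H₁ * S.1 * H₁ᴴ) := by
  refine concaveOn_comp_of_map_combo concaveOn_logDet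
    (convex_setOf_posSemidef.prod convex_setOf_posSemidef)
    (fun S hS => (posDef_one_add_mul_mul_conjTranspose H₂ hS.2).add_posSemidef
      (hS.1.mul_mul_conjTranspose_same H₁)) fun S Z a b hab => ?_
  simp only [Prod.fst_add, Prod.snd_add, Prod.smul_fst, Prod.smul_snd]
  rw [one_add_mul_mul_conjTranspose_combo H₂ S.2 Z.2 hab, Matrix.mul_add, Matrix.add_mul,
    Matrix.mul_smul, Matrix.mul_smul, Matrix.smul_mul, Matrix.smul_mul, add_add_add_comm,
    ← smul_add, ← smul_add]

theorem logDet_one_add_congr {H : Matrix r₁ t 𝕜} {K : Matrix r₂ t 𝕜} (h : Hᴴ * H = Kᴴ * K)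
    (S : Matrix t t 𝕜) : logDet (1 + H * S * Hᴴ) = logDet (1 + K * S * Kᴴ) := by
  classical
  have hdet : (1 + H * S * Hᴴ).det = (1 + K * S * Kᴴ).det := by
    rw [Matrix.mul_assoc, det_one_add_mul_comm, Matrix.mul_assoc S, h, ← Matrix.mul_assoc S,
      ← det_one_add_mul_comm, Matrix.mul_assoc]
  rw [logDet, hdet, logDet]

theorem concaveOn_logDet_sub_logDet_of_le
    {H : Matrix r₁ t 𝕜} {K : Matrix r₂ t 𝕜} (hHK : Hᴴ * H ≤ Kᴴ * K) :
    ConcaveOn ℝ {S : Matrix t t 𝕜 | S.PosSemidef}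
      fun S => logDet (1 + K * S * Kᴴ) - logDet (1 + H * S * Hᴴ) := by
  classical
  obtain ⟨E, hE⟩ := exists_eq_conjTranspose_mul_self (Matrix.le_iff.mp hHK)
  have hgram : (fromRows H E)ᴴ * fromRows H E = Kᴴ * K := by
    rw [conjTranspose_fromRows_eq_fromCols_conjTranspose, fromCols_mul_fromRows, ← hE,
      add_sub_cancel]
  have hblock (S : Matrix t t 𝕜) :
      (1 + fromRows H E * S * (fromRows H E)ᴴ).toBlocks₁₁ = 1 + H * S * Hᴴ := by
    rw [conjTranspose_fromRows_eq_fromCols_conjTranspose, fromRows_mul, fromRows_mul_fromCols,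
      ← fromBlocks_one, fromBlocks_add, toBlocks_fromBlocks₁₁]
  have hconcave := concaveOn_comp_one_add_mul_mul_conjTranspose
    concaveOn_logDet_sub_logDet_toBlocks₁₁ (fromRows H E)
  simpa only [hblock, logDet_one_add_congr hgram] using hconcave

/-- The weighted sum-rate of a two-user Z channel as a function of the pair `S = (Σ₁, Σ₂)` of input
covariances, where `Hᵢⱼ` is the channel from transmitter `j` to receiver `i`. -/
def weightedSumRate (w₁ w₂ : ℝ) (H₁₁ : Matrix r₁ t₁ 𝕜) (H₁₂ : Matrix r₁ t₂ 𝕜)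
    (H₂₂ : Matrix r₂ t₂ 𝕜) (S : Matrix t₁ t₁ 𝕜 × Matrix t₂ t₂ 𝕜) : ℝ :=
  w₁ * (logDet (1 + H₁₂ * S.2 * H₁₂ᴴ + H₁₁ * S.1 * H₁₁ᴴ) - logDet (1 + H₁₂ * S.2 * H₁₂ᴴ))
    + w₂ * logDet (1 + H₂₂ * S.2 * H₂₂ᴴ)

theorem stmt11_general (H₁₁ : Matrix r₁ t₁ 𝕜) (H₁₂ : Matrix r₁ t₂ 𝕜)
    (H₂₂ : Matrix r₂ t₂ 𝕜) (hH : H₁₂ᴴ * H₁₂ ≤ H₂₂ᴴ * H₂₂)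
    {w₁ w₂ : ℝ} (hw₁ : 0 ≤ w₁) (hw : w₁ ≤ w₂) :
    ConcaveOn ℝ ({S : Matrix t₁ t₁ 𝕜 | S.PosSemidef} ×ˢ {S : Matrix t₂ t₂ 𝕜 | S.PosSemidef})
      (weightedSumRate w₁ w₂ H₁₁ H₁₂ H₂₂) := by
  let snd := LinearMap.snd ℝ (Matrix t₁ t₁ 𝕜) (Matrix t₂ t₂ 𝕜)
  have hconvex : Convex ℝ
      ({S : Matrix t₁ t₁ 𝕜 | S.PosSemidef} ×ˢ {S : Matrix t₂ t₂ 𝕜 | S.PosSemidef}) :=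
    convex_setOf_posSemidef.prod convex_setOf_posSemidef
  have htotal := concaveOn_logDet_one_add_add H₁₁ H₁₂
  have hdiff := ((concaveOn_logDet_sub_logDet_of_le hH).comp_linearMap snd).subset
    (fun _ hS => hS.2) hconvex
  have hdirect := ((concaveOn_comp_one_add_mul_mul_conjTranspose concaveOn_logDet
    H₂₂).comp_linearMap snd).subset (fun _ hS => hS.2) hconvex
  refine (((htotal.smul hw₁).add (hdiff.smul hw₁)).add
    (hdirect.smul (sub_nonneg.mpr hw))).congr fun S _ => ?_
  simp only [weightedSumRate, Pi.add_apply, smul_eq_mul, Function.comp_apply, snd,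
    LinearMap.snd_apply]
  ring

end Channel

end WeightedSumRate

/-- Concavity of the weighted sum-rate of a two-user Z channel when
`H₂₂ᴴH₂₂ ⪰ H₁₂ᴴH₁₂`, the channels are invertible, and `w₁ ≤ w₂`. -/
theorem stmt11 {m m1 : ℕ}
    (H11 : Matrix (Fin m) (Fin m1) ℂ)
    (H12 H22 : Matrix (Fin m) (Fin m) ℂ)
    (hH12 : IsUnit H12) (hH22 : IsUnit H22)
    (hdom : (H22ᴴ * H22 - H12ᴴ * H12).PosSemidef)
    (w1 w2 : ℝ) (hw1 : 0 ≤ w1) (hw2 : 0 ≤ w2) (hw : w1 ≤ w2)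
    (f : Matrix (Fin m1) (Fin m1) ℂ → Matrix (Fin m) (Fin m) ℂ → ℝ)
    (hf : ∀ S1 S2, f S1 S2 =
      w1 * (Real.log ((1 + H12 * S2 * H12ᴴ + H11 * S1 * H11ᴴ).det.re)
          - Real.log ((1 + H12 * S2 * H12ᴴ).det.re))
        + w2 * Real.log ((1 + H22 * S2 * H22ᴴ).det.re)) :
    ∀ (S1 : Matrix (Fin m1) (Fin m1) ℂ) (S2 : Matrix (Fin m) (Fin m) ℂ)
      (Z1 : Matrix (Fin m1) (Fin m1) ℂ) (Z2 : Matrix (Fin m) (Fin m) ℂ),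
      S1.PosSemidef → S2.PosSemidef → Z1.PosSemidef → Z2.PosSemidef →
      ∀ t : ℝ, 0 ≤ t → t ≤ 1 →
        t * f S1 S2 + (1 - t) * f Z1 Z2
          ≤ f (t • S1 + (1 - t) • Z1) (t • S2 + (1 - t) • Z2) := by
  intro S1 S2 Z1 Z2 hS1 hS2 hZ1 hZ2 t ht0 ht1
  simp only [hf]
  exact (stmt11_general H11 H12 H22 hdom hw1 hw).2 (x := (S1, S2)) ⟨hS1, hS2⟩
    (y := (Z1, Z2)) ⟨hZ1, hZ2⟩ ht0 (sub_nonneg.mpr ht1) (add_sub_cancel t 1)
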